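/- arXiv:1909.00220 — 2 statements merged into one kernel-verified Lean document; each statement's English description precedes it below -/
import Mathlib

section
/- Fix z ∈ ℂ with Re z ≥ 0. For every integer k ≥ 0 there exists a constant c_k = c(k,z) > 0 such that for all s > 0, all r > 0 and all integers j ≥ 0, the Fourier transform ĥ^z_{j,r}(t) = ∫_ℝ h^z_{j,r}(ξ) e^{−itξ} dξ satisfies ∫_{|t| ≥ s} |ĥ^z_{j,r}(t)| dt ≤ c_k s^{−k} r^{−k} 2^{(k − Re z)j}. -/
open Real MeasureTheory

/-- ψ(ξ) = e^{−1/ξ²} for ξ > 0 and 0 for ξ ≤ 0. -/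
noncomputable def psi (x : ℝ) : ℝ := if 0 < x then Real.exp (-1 / x ^ 2) else 0

/-- ψ₁(ξ) = ψ(ξ)ψ(1−ξ). -/
noncomputable def psi1 (x : ℝ) : ℝ := psi x * psi (1 - x)

/-- φ(ξ) = ψ₁(ξ + 5/4). -/
noncomputable def phiFn (x : ℝ) : ℝ := psi1 (x + 5 / 4)

/-- φ_j(ξ) = φ(2^j(ξ − 1)). -/
noncomputable def phiJ (j : ℕ) (x : ℝ) : ℝ := phiFn (2 ^ j * (x - 1))

/-- χ_j(ξ) = φ_j(ξ)/Σ_{i≥0} φ_i(ξ) where the denominator is positive, and 0 otherwise. -/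
noncomputable def chiJ (j : ℕ) (x : ℝ) : ℝ :=
  if 0 < ∑' i : ℕ, phiJ i x then phiJ j x / ∑' i : ℕ, phiJ i x else 0

/-- h^z_{j,r}(ξ) = (1 − ξ²/r²)_+^z e^{ξ²/r²} χ_j((ξ/r)²). -/
noncomputable def hzjr (z : ℂ) (j : ℕ) (r : ℝ) (x : ℝ) : ℂ :=
  (if 0 < 1 - x ^ 2 / r ^ 2 then ((1 - x ^ 2 / r ^ 2 : ℝ) : ℂ) ^ z else 0) *
    Complex.exp ((x ^ 2 / r ^ 2 : ℝ) : ℂ) * ((chiJ j ((x / r) ^ 2) : ℝ) : ℂ)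

section Aux
open Polynomial Filter Topology

theorem psi_zero {x : ℝ} (hx : x ≤ 0) : psi x = 0 := by simp [psi, not_lt.2 hx]

theorem psi_pos {x : ℝ} (hx : 0 < x) : 0 < psi x := by simp [psi, hx, Real.exp_pos]

theorem psi_nonneg (x : ℝ) : 0 ≤ psi x := by
  rcases le_or_gt x 0 with h | h
  · exact (psi_zero h).ge
  · exact (psi_pos h).le

theorem psi_le_glue {x : ℝ} (hx : x < 1) : psi x ≤ expNegInvGlue x := by
  rcases le_or_gt x 0 with h | h
  · rw [psi_zero h, expNegInvGlue.zero_of_nonpos h]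
  · simp only [psi, h, if_true, expNegInvGlue, not_le.2 h, if_false]
    apply Real.exp_le_exp.2
    rw [neg_div, neg_le_neg_iff, inv_eq_one_div]
    apply one_div_le_one_div_of_le (by positivity)
    nlinarith

theorem psi_tendsto (p : ℝ[X]) :
    Tendsto (fun x ↦ p.eval x⁻¹ * psi x) (𝓝 0) (𝓝 0) := by
  have h := (expNegInvGlue.tendsto_polynomial_inv_mul_zero p).norm
  rw [norm_zero] at h
  refine squeeze_zero_norm' ?_ h
  filter_upwards [gt_mem_nhds (show (0:ℝ) < 1 by norm_num)] with x hx
  rw [norm_mul, norm_mul]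
  apply mul_le_mul_of_nonneg_left _ (norm_nonneg _)
  rw [Real.norm_of_nonneg (psi_nonneg x), Real.norm_of_nonneg (expNegInvGlue.nonneg x)]
  exact psi_le_glue hx

theorem psi_hasDerivAt (p : ℝ[X]) (x : ℝ) :
    HasDerivAt (fun x ↦ p.eval x⁻¹ * psi x)
      ((2 * X ^ 3 * p - X ^ 2 * derivative (R := ℝ) p).eval x⁻¹ * psi x) x := by
  rcases lt_trichotomy x 0 with hx | rfl | hx
  · rw [psi_zero hx.le, mul_zero]
    refine (hasDerivAt_const _ 0).congr_of_eventuallyEq ?_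
    filter_upwards [gt_mem_nhds hx] with y hy
    rw [psi_zero hy.le, mul_zero]
  · rw [psi_zero le_rfl, mul_zero, hasDerivAt_iff_tendsto_slope]
    refine ((psi_tendsto (p * X)).mono_left inf_le_left).congr fun x ↦ ?_
    simp [slope_def_field, div_eq_mul_inv, mul_right_comm, psi_zero le_rfl]
  · have h1 := (p.hasDerivAt x⁻¹).comp x (hasDerivAt_inv hx.ne')
    have h2 : HasDerivAt (fun y : ℝ => Real.exp (-1 / y ^ 2))
        (Real.exp (-1 / x ^ 2) * (2 / x ^ 3)) x := by
      have := (((hasDerivAt_pow 2 x).inv (by positivity)).const_mul (-1)).exp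
      convert! this using 1
      · simp [Pi.inv_apply, div_eq_mul_inv]
        field_simp
    have := (h1.mul h2).congr_of_eventuallyEq (f₁ := fun x ↦ p.eval x⁻¹ * psi x) (by
      filter_upwards [lt_mem_nhds hx] with y hy
      simp [psi, hy])
    convert! this using 1
    simp [psi, hx]
    field_simp
    ring

theorem psi_contDiff_aux (m : ℕ) (p : ℝ[X]) : ContDiff ℝ m (fun x ↦ p.eval x⁻¹ * psi x) := by
  have hd : ∀ p : ℝ[X], Differentiable ℝ (fun x ↦ p.eval x⁻¹ * psi x) :=
    fun p x => (psi_hasDerivAt p x).differentiableAt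
  induction m generalizing p with
  | zero => exact contDiff_zero.2 (hd p).continuous
  | succ m ihm =>
    rw [show ((m + 1 : ℕ) : WithTop ℕ∞) = m + 1 from rfl]
    refine contDiff_succ_iff_deriv.2 ⟨hd p, by simp, ?_⟩
    convert! ihm (2 * X ^ 3 * p - X ^ 2 * derivative (R := ℝ) p) using 2
    exact (psi_hasDerivAt p _).deriv

theorem psi_contDiff {n : ℕ∞} : ContDiff ℝ n psi := by
  have := contDiff_all_iff_nat.2 (fun m => psi_contDiff_aux m 1) n
  simpa using this

end Aux
section Four
open Filter Topology

/-- The oscillatory integral. -/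
noncomputable def oscInt (B P : ℝ → ℂ) (N τ : ℝ) : ℂ :=
  ∫ x : ℝ, B (N * (1 - x ^ 2)) * P x * Complex.exp (-(Complex.I * τ * x))

theorem supp_aux {B : ℝ → ℂ} (hB : ∀ v, v ∉ Set.Icc (1/4 : ℝ) (5/4) → B v = 0) {N x : ℝ}
    (hN : 1 ≤ N) (hx : x ∉ Set.Icc (-1 : ℝ) (-1 + 5/4 / N) ∪ Set.Icc (1 - 5/4 / N) 1) :
    B (N * (1 - x ^ 2)) = 0 := by
  apply hB
  intro h
  apply hx
  have hN0 : 0 < N := by linarith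
  have h1 : 0 < 1 - x ^ 2 := by
    by_contra hc
    nlinarith [h.1]
  have h2 : 1 - x ^ 2 ≤ 5/4 / N := by
    rw [le_div_iff₀ hN0]; linarith [h.2]
  have h3 : |x| ≤ 1 := by
    rw [← sq_le_one_iff_abs_le_one]; linarith
  have h4 := abs_le.1 h3
  rcases le_total 0 x with h0 | h0
  · right
    refine ⟨?_, h4.2⟩
    nlinarith
  · left
    refine ⟨h4.1, ?_⟩
    nlinarith

theorem supp_sub {N : ℝ} (hN : 1 ≤ N) {B : ℝ → ℂ}
    (hB : ∀ v, v ∉ Set.Icc (1/4 : ℝ) (5/4) → B v = 0) {x : ℝ}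
    (hx : x ∉ Set.Icc (-1 : ℝ) 1) : B (N * (1 - x ^ 2)) = 0 := by
  apply hB
  intro h
  apply hx
  have h1 : 0 < 1 - x ^ 2 := by
    by_contra hc
    nlinarith [h.1]
  rw [Set.mem_Icc, ← abs_le, ← sq_le_one_iff_abs_le_one]; linarith

theorem osc_integrable {B P : ℝ → ℂ} (cB : Continuous B) (cP : Continuous P)
    (hB : ∀ v, v ∉ Set.Icc (1/4 : ℝ) (5/4) → B v = 0) {N : ℝ} (hN : 1 ≤ N) (τ : ℝ) :
    Integrable (fun x : ℝ => B (N * (1 - x ^ 2)) * P x * Complex.exp (-(Complex.I * τ * x))) := by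
  apply Continuous.integrable_of_hasCompactSupport
  · fun_prop
  · apply HasCompactSupport.intro (isCompact_Icc (a := (-1 : ℝ)) (b := 1))
    intro x hx
    rw [supp_sub hN hB hx]; simp

theorem norm_cexp (τ x : ℝ) : ‖Complex.exp (-(Complex.I * τ * x))‖ = 1 := by
  rw [show -(Complex.I * τ * x) = ((-(τ * x) : ℝ) : ℂ) * Complex.I by push_cast; ring]
  exact Complex.norm_exp_ofReal_mul_I _

theorem osc_base {B P : ℝ → ℂ} (cB : Continuous B) (cP : Continuous P)
    (hB : ∀ v, v ∉ Set.Icc (1/4 : ℝ) (5/4) → B v = 0) :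
    ∃ C : ℝ, 0 ≤ C ∧ ∀ N : ℝ, 1 ≤ N → ∀ τ : ℝ, ‖oscInt B P N τ‖ ≤ C / N := by
  obtain ⟨M1, h1⟩ := (isCompact_Icc (a := (1/4 : ℝ)) (b := 5/4)).exists_bound_of_continuousOn
    cB.continuousOn
  obtain ⟨M2, h2⟩ := (isCompact_Icc (a := (-1 : ℝ)) (b := 1)).exists_bound_of_continuousOn
    cP.continuousOn
  have hM1 : 0 ≤ M1 := (norm_nonneg _).trans (h1 1 (by constructor <;> norm_num))
  have hM2 : 0 ≤ M2 := (norm_nonneg _).trans (h2 1 (by constructor <;> norm_num))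
  refine ⟨M1 * M2 * (5/2), by positivity, fun N hN τ => ?_⟩
  have hN0 : 0 < N := by linarith
  unfold oscInt
  rw [← setIntegral_eq_integral_of_forall_compl_eq_zero
    (s := Set.Icc (-1 : ℝ) (-1 + 5/4 / N) ∪ Set.Icc (1 - 5/4 / N) 1)
    (fun x hx => by rw [supp_aux hB hN hx]; simp)]
  have hfin : volume (Set.Icc (-1 : ℝ) (-1 + 5/4 / N) ∪ Set.Icc (1 - 5/4 / N) 1) < ⊤ :=
    (isCompact_Icc.union isCompact_Icc).measure_lt_top
  refine (norm_setIntegral_le_of_norm_le_const (C := M1 * M2) hfin ?_).trans ?_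
  · intro x _
    rw [norm_mul, norm_cexp, mul_one, norm_mul]
    by_cases hv : N * (1 - x ^ 2) ∈ Set.Icc (1/4 : ℝ) (5/4)
    · by_cases hx : x ∈ Set.Icc (-1 : ℝ) 1
      · exact mul_le_mul (h1 _ hv) (h2 _ hx) (norm_nonneg _) hM1
      · rw [supp_sub hN hB hx]; simp; positivity
    · rw [hB _ hv]; simp; positivity
  · have : volume.real (Set.Icc (-1 : ℝ) (-1 + 5/4 / N) ∪ Set.Icc (1 - 5/4 / N) 1)
        ≤ 5/2 / N := by
      refine (measureReal_union_le _ _).trans ?_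
      have hp : 0 ≤ 5/4/N := by positivity
      rw [Real.volume_real_Icc_of_le (by linarith), Real.volume_real_Icc_of_le (by linarith)]
      apply le_of_eq
      ring
    calc _ ≤ M1 * M2 * (5/2 / N) := by gcongr
      _ = _ := by ring

theorem deriv_supp {B : ℝ → ℂ} (hB : ∀ v, v ∉ Set.Icc (1/4 : ℝ) (5/4) → B v = 0) :
    ∀ v, v ∉ Set.Icc (1/4 : ℝ) (5/4) → deriv B v = 0 := by
  intro v hv
  have : B =ᶠ[𝓝 v] fun _ => 0 := by
    filter_upwards [isClosed_Icc.isOpen_compl.mem_nhds hv] with y hy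
    exact hB y hy
  rw [this.deriv_eq]; simp

theorem osc_parts {B P : ℝ → ℂ} (cB : ContDiff ℝ (⊤ : ℕ∞) B) (cP : ContDiff ℝ (⊤ : ℕ∞) P)
    (hB : ∀ v, v ∉ Set.Icc (1/4 : ℝ) (5/4) → B v = 0) {N : ℝ} (hN : 1 ≤ N) (τ : ℝ) :
    (Complex.I * τ) * oscInt B P N τ =
      N * oscInt (deriv B) (fun x => -2 * x * P x) N τ + oscInt B (deriv P) N τ := by
  have cB' : Continuous (deriv B) := cB.continuous_deriv (by simp)
  have cP' : Continuous (deriv P) := cP.continuous_deriv (by simp)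
  have dB : Differentiable ℝ B := cB.differentiable (by simp)
  have dP : Differentiable ℝ P := cP.differentiable (by simp)
  have I1 := osc_integrable cB' (P := fun x : ℝ => -2 * (x : ℂ) * P x)
    (by have := cP.continuous; fun_prop) (deriv_supp hB) hN τ
  have I2 := osc_integrable cB.continuous cP' hB hN τ
  have I3 := osc_integrable cB.continuous cP.continuous hB hN τ
  have key := integral_mul_deriv_eq_deriv_mul_of_integrable
    (u := fun x : ℝ => B (N * (1 - x ^ 2)) * P x)
    (u' := fun x : ℝ => N * (deriv B (N * (1 - x ^ 2)) * (-2 * x * P x))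
      + B (N * (1 - x ^ 2)) * deriv P x)
    (v := fun x : ℝ => Complex.exp (-(Complex.I * τ * x)))
    (v' := fun x : ℝ => -(Complex.I * τ) * Complex.exp (-(Complex.I * τ * x)))
    (fun x _ => by
      have hin : HasDerivAt (fun x : ℝ => N * (1 - x ^ 2)) (N * (-2 * x)) x := by
        have := ((hasDerivAt_pow 2 x).const_sub 1).const_mul N
        convert! this using 1
        simp
      have h1 := (dB (N * (1 - x ^ 2))).hasDerivAt.scomp x hin
      have h2 := h1.mul (dP x).hasDerivAt
      convert! h2 using 1
      simp
      ring)
    (fun x _ => by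
      have h1 : HasDerivAt (fun x : ℝ => (x : ℂ)) 1 x := Complex.ofRealCLM.hasDerivAt
      have h2 := ((h1.const_mul (Complex.I * τ)).neg).cexp
      convert! h2 using 1
      simp only [Pi.neg_apply]
      ring)
    (by
      convert! I3.const_mul (-(Complex.I * τ)) using 1
      ext x; simp; ring)
    (by
      convert! (I1.const_mul (N : ℂ)).add I2 using 1
      ext x; simp; ring)
    (by exact I3)
  have e1 : ∫ x : ℝ, B (N * (1 - x ^ 2)) * P x *
      (-(Complex.I * τ) * Complex.exp (-(Complex.I * τ * x))) =
      -(Complex.I * τ) * oscInt B P N τ := by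
    rw [oscInt, ← integral_const_mul]
    congr 1; ext x; ring
  have e2 : ∫ x : ℝ, (N * (deriv B (N * (1 - x ^ 2)) * (-2 * x * P x))
      + B (N * (1 - x ^ 2)) * deriv P x) * Complex.exp (-(Complex.I * τ * x)) =
      N * oscInt (deriv B) (fun x => -2 * x * P x) N τ + oscInt B (deriv P) N τ := by
    rw [oscInt, oscInt, ← integral_const_mul, ← integral_add (I1.const_mul _) I2]
    congr 1; ext x; ring
  rw [e1, e2] at key
  linear_combination -key

theorem osc_bound (m : ℕ) : ∀ {B P : ℝ → ℂ}, ContDiff ℝ (⊤ : ℕ∞) B → ContDiff ℝ (⊤ : ℕ∞) P →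
    (∀ v, v ∉ Set.Icc (1/4 : ℝ) (5/4) → B v = 0) →
    ∃ C : ℝ, 0 ≤ C ∧ ∀ N : ℝ, 1 ≤ N → ∀ τ : ℝ, |τ| ^ m * ‖oscInt B P N τ‖ ≤ C * N ^ m / N := by
  induction m with
  | zero =>
    intro B P cB cP hB
    simpa using osc_base cB.continuous cP.continuous hB
  | succ m ih =>
    intro B P cB cP hB
    have cB' : ContDiff ℝ (⊤ : ℕ∞) (deriv B) := (contDiff_infty_iff_deriv.1 cB).2
    have cP' : ContDiff ℝ (⊤ : ℕ∞) (deriv P) := (contDiff_infty_iff_deriv.1 cP).2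
    have cQ : ContDiff ℝ (⊤ : ℕ∞) (fun x : ℝ => -2 * (x : ℂ) * P x) := by
      have : ContDiff ℝ (⊤ : ℕ∞) (fun x : ℝ => (x : ℂ)) := Complex.ofRealCLM.contDiff
      exact (contDiff_const.mul this).mul cP
    obtain ⟨C1, hC1, h1⟩ := ih cB' cQ (deriv_supp hB)
    obtain ⟨C2, hC2, h2⟩ := ih cB cP' hB
    refine ⟨C1 + C2, by positivity, fun N hN τ => ?_⟩
    have hN0 : 0 < N := by linarith
    have hp := congrArg norm (osc_parts cB cP hB hN τ)
    rw [norm_mul, norm_mul, Complex.norm_I, one_mul, Complex.norm_real, Real.norm_eq_abs] at hp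
    have ht := norm_add_le (N * oscInt (deriv B) (fun x => -2 * x * P x) N τ)
      (oscInt B (deriv P) N τ)
    rw [norm_mul, Complex.norm_real, Real.norm_of_nonneg hN0.le] at ht
    have hτ : 0 ≤ |τ| ^ m := by positivity
    calc |τ| ^ (m + 1) * ‖oscInt B P N τ‖ = |τ| ^ m * (|τ| * ‖oscInt B P N τ‖) := by ring
      _ ≤ |τ| ^ m * (N * ‖oscInt (deriv B) (fun x => -2 * x * P x) N τ‖
          + ‖oscInt B (deriv P) N τ‖) := by rw [hp]; gcongr
      _ = N * (|τ| ^ m * ‖oscInt (deriv B) (fun x => -2 * x * P x) N τ‖)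
          + |τ| ^ m * ‖oscInt B (deriv P) N τ‖ := by ring
      _ ≤ N * (C1 * N ^ m / N) + 1 * (C2 * N ^ m / N) := by
          rw [one_mul]; gcongr
          · exact h1 N hN τ
          · exact h2 N hN τ
      _ ≤ N * (C1 * N ^ m / N) + N * (C2 * N ^ m / N) := by gcongr
      _ = _ := by ring

end Four
section Cut
open Filter Topology

/-- Reflected profile. -/
noncomputable def bigPhi (v : ℝ) : ℝ := phiFn (-v)

theorem bigPhi_eq (v : ℝ) : bigPhi v = psi (5/4 - v) * psi (v - 1/4) := by
  unfold bigPhi phiFn psi1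
  congr 2 <;> ring

theorem bigPhi_nonneg (v : ℝ) : 0 ≤ bigPhi v := by
  rw [bigPhi_eq]; exact mul_nonneg (psi_nonneg _) (psi_nonneg _)

theorem bigPhi_pos {v : ℝ} (h1 : 1/4 < v) (h2 : v < 5/4) : 0 < bigPhi v := by
  rw [bigPhi_eq]; exact mul_pos (psi_pos (by linarith)) (psi_pos (by linarith))

theorem bigPhi_zero_left {v : ℝ} (h : v ≤ 1/4) : bigPhi v = 0 := by
  rw [bigPhi_eq, psi_zero (x := v - 1/4) (by linarith), mul_zero]

theorem bigPhi_zero_right {v : ℝ} (h : 5/4 ≤ v) : bigPhi v = 0 := by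
  rw [bigPhi_eq, psi_zero (x := 5/4 - v) (by linarith), zero_mul]

theorem bigPhi_contDiff : ContDiff ℝ (⊤ : ℕ∞) bigPhi := by
  have : bigPhi = fun v => psi (5/4 - v) * psi (v - 1/4) := funext bigPhi_eq
  rw [this]
  exact (psi_contDiff.comp (contDiff_const.sub contDiff_id)).mul
    (psi_contDiff.comp (contDiff_id.sub contDiff_const))

theorem phiJ_eq (i : ℕ) (x : ℝ) : phiJ i x = bigPhi (2 ^ i * (1 - x)) := by
  unfold phiJ bigPhi
  congr 1; ring

/-- Modified denominator. -/
noncomputable def denF (i : ℕ) (v : ℝ) : ℝ :=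
  ∑ m ∈ Finset.range (i + 3), bigPhi (2 ^ m / 2 ^ i * v) + psi (v - 2 ^ i)

theorem denF_contDiff (i : ℕ) : ContDiff ℝ (⊤ : ℕ∞) (denF i) := by
  unfold denF
  apply ContDiff.add
  · apply ContDiff.sum
    intro m _
    exact bigPhi_contDiff.comp (contDiff_const.mul contDiff_id)
  · exact psi_contDiff.comp (contDiff_id.sub contDiff_const)

theorem denF_pos (i : ℕ) {v : ℝ} (h1 : 1/4 ≤ v) (h2 : v ≤ 5/4) : 0 < denF i v := by
  have hs : ∀ m < i + 3, 0 < bigPhi (2 ^ m / 2 ^ i * v) → 0 < denF i v := by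
    intro m hm hp
    unfold denF
    have := Finset.single_le_sum (f := fun m => bigPhi (2 ^ m / 2 ^ i * v))
      (fun m _ => bigPhi_nonneg _) (Finset.mem_range.2 hm)
    have h3 := psi_nonneg (v - 2 ^ i)
    linarith
  rcases h1.lt_or_eq with h1 | h1
  · rcases h2.lt_or_eq with h2 | h2
    · apply hs i (by omega)
      rw [div_self (by positivity), one_mul]
      exact bigPhi_pos h1 h2
    · rcases i with _ | i
      · unfold denF
        have : 0 < psi (v - 2 ^ 0) := psi_pos (by rw [h2]; norm_num)
        have h3 := Finset.sum_nonneg (s := Finset.range (0 + 3))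
          (f := fun m => bigPhi (2 ^ m / 2 ^ 0 * v)) (fun m _ => bigPhi_nonneg _)
        exact add_pos_of_nonneg_of_pos h3 this
      · apply hs i (by omega)
        rw [pow_succ, div_mul_cancel_left₀ (by positivity)]
        apply bigPhi_pos <;> rw [h2] <;> norm_num
  · apply hs (i + 1) (by omega)
    rw [pow_succ, mul_div_cancel_left₀ _ (by positivity)]
    apply bigPhi_pos <;> rw [← h1] <;> norm_num

/-- Profile. -/
noncomputable def Bf (z : ℂ) (i : ℕ) (v : ℝ) : ℂ :=
  (v : ℂ) ^ z * ((bigPhi v / denF i v : ℝ) : ℂ)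

theorem Bf_zero (z : ℂ) (i : ℕ) : ∀ v, v ∉ Set.Icc (1/4 : ℝ) (5/4) → Bf z i v = 0 := by
  intro v hv
  have : bigPhi v = 0 := by
    rcases lt_or_ge v (1/4) with h | h
    · exact bigPhi_zero_left h.le
    · apply bigPhi_zero_right
      by_contra hc
      exact hv ⟨h, by linarith⟩
  simp [Bf, this]

theorem Bf_contDiff (z : ℂ) (i : ℕ) : ContDiff ℝ (⊤ : ℕ∞) (Bf z i) := by
  rw [contDiff_iff_contDiffAt]
  intro v
  by_cases hv : v ∈ Set.Icc (1/4 : ℝ) (5/4)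
  · unfold Bf
    have hv0 : 0 < v := by linarith [hv.1]
    have c1 : ContDiffAt ℝ (⊤ : ℕ∞) (fun v : ℝ => (v : ℂ)) v :=
      Complex.ofRealCLM.contDiff.contDiffAt
    have c2 : ContDiffAt ℝ (⊤ : ℕ∞) (fun v : ℝ => (v : ℂ) ^ z) v := by
      have h : AnalyticAt ℂ (fun w : ℂ => w ^ z) (v : ℂ) :=
        analyticAt_id.cpow analyticAt_const (Complex.ofReal_mem_slitPlane.2 hv0)
      exact (h.restrictScalars.contDiffAt (𝕜 := ℝ)).comp v c1
    have c3 : ContDiffAt ℝ (⊤ : ℕ∞) (fun v : ℝ => bigPhi v / denF i v) v :=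
      bigPhi_contDiff.contDiffAt.div (denF_contDiff i).contDiffAt (denF_pos i hv.1 hv.2).ne'
    exact c2.mul (Complex.ofRealCLM.contDiff.contDiffAt.comp v c3)
  · have : Bf z i =ᶠ[𝓝 v] fun _ => 0 := by
      filter_upwards [isClosed_Icc.isOpen_compl.mem_nhds hv] with y hy
      exact Bf_zero z i y hy
    exact contDiffAt_const.congr_of_eventuallyEq this

theorem chiJ_eq_div (j : ℕ) (x : ℝ) : chiJ j x = phiJ j x / ∑' i : ℕ, phiJ i x := by
  unfold chiJ
  split_ifs with h
  · rfl
  · have h0 : 0 ≤ ∑' i : ℕ, phiJ i x := tsum_nonneg fun i => by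
      rw [phiJ_eq]; exact bigPhi_nonneg _
    rw [le_antisymm (not_lt.1 h) h0, div_zero]

theorem tsum_eq (j : ℕ) {u : ℝ} (hu1 : u ≤ 1) (h1 : 1/4 < 2 ^ j * u)
    (h2 : 2 ^ j * u < 5/4) :
    ∑' n : ℕ, bigPhi (2 ^ n * u) = denF (min j 2) (2 ^ j * u) := by
  have hu0 : 0 < u := by
    by_contra hc
    have : (0:ℝ) < 2 ^ j := by positivity
    nlinarith
  have hp : psi (2 ^ j * u - 2 ^ (min j 2)) = 0 := by
    apply psi_zero
    rcases le_total j 2 with h | h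
    · rw [min_eq_left h]
      have : (0:ℝ) < 2 ^ j := by positivity
      nlinarith
    · rw [min_eq_right h]; linarith
  unfold denF
  rw [hp, add_zero, tsum_eq_sum (s := Finset.Ico (j - min j 2) (j + 3)),
    Finset.sum_Ico_eq_sum_range]
  · rw [show j + 3 - (j - min j 2) = min j 2 + 3 by omega]
    apply Finset.sum_congr rfl
    intro m _
    congr 1
    have : (2:ℝ) ^ j = 2 ^ (j - min j 2) * 2 ^ (min j 2) := by
      rw [← pow_add]; congr 1; omega
    rw [this, pow_add]
    field_simp
  · intro n hn
    rw [Finset.mem_Ico, not_and_or] at hn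
    rcases hn with hn | hn
    · apply bigPhi_zero_left
      have h3 : (2:ℝ) ^ (n + 3) ≤ 2 ^ j := pow_le_pow_right₀ (by norm_num) (by omega)
      rw [pow_add] at h3
      nlinarith
    · apply bigPhi_zero_right
      have h3 : (2:ℝ) ^ (j + 3) ≤ 2 ^ n := pow_le_pow_right₀ (by norm_num) (by omega)
      rw [pow_add] at h3
      nlinarith

theorem chiJ_eq (j : ℕ) {x : ℝ} (hx : 0 ≤ x) :
    chiJ j x = bigPhi (2 ^ j * (1 - x)) / denF (min j 2) (2 ^ j * (1 - x)) := by
  rw [chiJ_eq_div, phiJ_eq]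
  by_cases h : 1/4 < 2 ^ j * (1 - x) ∧ 2 ^ j * (1 - x) < 5/4
  · rw [← tsum_eq j (by linarith) h.1 h.2]
    simp only [phiJ_eq]
  · have : bigPhi (2 ^ j * (1 - x)) = 0 := by
      rcases not_and_or.1 h with h | h
      · exact bigPhi_zero_left (not_lt.1 h)
      · exact bigPhi_zero_right (not_lt.1 h)
    rw [this, zero_div, zero_div]

theorem hzjr_eq (z : ℂ) (j : ℕ) (r x : ℝ) :
    hzjr z j r x = ((2 ^ j : ℝ) : ℂ) ^ (-z) *
      (Bf z (min j 2) (2 ^ j * (1 - (x / r) ^ 2)) * Complex.exp (((x / r : ℝ) : ℂ) ^ 2)) := by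
  have hp : (0:ℝ) < 2 ^ j := by positivity
  unfold hzjr
  rw [← div_pow, chiJ_eq j (sq_nonneg _)]
  split_ifs with h
  · have e1 : ((2 ^ j : ℝ) : ℂ) ^ (-z) * ((2 ^ j : ℝ) : ℂ) ^ z = 1 := by
      rw [Complex.cpow_neg, inv_mul_cancel₀]
      rw [Complex.cpow_ne_zero_iff]
      left
      exact_mod_cast hp.ne'
    rw [Bf, Complex.ofReal_mul (2 ^ j) (1 - (x / r) ^ 2),
      Complex.mul_cpow_ofReal_nonneg hp.le h.le]
    rw [Complex.ofReal_pow (x / r) 2]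
    linear_combination (-(((1 - (x / r) ^ 2 : ℝ) : ℂ) ^ z * Complex.exp (((x / r : ℝ) : ℂ) ^ 2) *
      ((bigPhi (2 ^ j * (1 - (x / r) ^ 2)) /
        denF (min j 2) (2 ^ j * (1 - (x / r) ^ 2)) : ℝ) : ℂ))) * e1
  · rw [Bf_zero]
    · simp
    · intro hc
      have := hc.1
      nlinarith

end Cut
theorem hzjr_hat (z : ℂ) (j : ℕ) {r : ℝ} (hr : 0 < r) (t : ℝ) :
    ∫ x : ℝ, hzjr z j r x * Complex.exp (-(Complex.I * t * x)) =
      r * (((2 ^ j : ℝ) : ℂ) ^ (-z) *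
        oscInt (Bf z (min j 2)) (fun x => Complex.exp ((x : ℂ) ^ 2)) (2 ^ j) (r * t)) := by
  have h := Measure.integral_comp_div (fun y : ℝ => ((2 ^ j : ℝ) : ℂ) ^ (-z) *
    (Bf z (min j 2) (2 ^ j * (1 - y ^ 2)) * Complex.exp ((y : ℂ) ^ 2) *
      Complex.exp (-(Complex.I * (r * t : ℝ) * y)))) r
  rw [abs_of_pos hr, Complex.real_smul] at h
  rw [oscInt, ← integral_const_mul, ← h]
  congr 1
  ext x
  rw [hzjr_eq]
  have : Complex.I * t * x = Complex.I * (r * t : ℝ) * (x / r : ℝ) := by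
    have : (r : ℂ) ≠ 0 := by exact_mod_cast hr.ne'
    push_cast
    field_simp
  rw [this]
  ring

theorem osc_final (z : ℂ) (k i : ℕ) : ∃ C : ℝ, 0 ≤ C ∧ ∀ N : ℝ, 1 ≤ N → ∀ τ : ℝ,
    |τ| ^ k * ‖oscInt (Bf z i) (fun x => Complex.exp ((x : ℂ) ^ 2)) N τ‖ ≤
      C * N ^ k / N * (1 + (τ / N) ^ 2)⁻¹ := by
  have cP : ContDiff ℝ (⊤ : ℕ∞) (fun x : ℝ => Complex.exp ((x : ℂ) ^ 2)) := by
    have : ContDiff ℝ (⊤ : ℕ∞) (fun x : ℝ => (x : ℂ)) := Complex.ofRealCLM.contDiff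
    exact (this.pow 2).cexp
  obtain ⟨C1, h1, H1⟩ := osc_bound k (Bf_contDiff z i) cP (Bf_zero z i)
  obtain ⟨C2, h2, H2⟩ := osc_bound (k + 2) (Bf_contDiff z i) cP (Bf_zero z i)
  refine ⟨C1 + C2, by positivity, fun N hN τ => ?_⟩
  have hN0 : 0 < N := by linarith
  have a1 := H1 N hN τ
  have a2 := H2 N hN τ
  set F := ‖oscInt (Bf z i) (fun x => Complex.exp ((x : ℂ) ^ 2)) N τ‖
  rw [← div_eq_mul_inv, le_div_iff₀ (by positivity)]
  have a3 : |τ| ^ (k + 2) * F / N ^ 2 ≤ C2 * N ^ k / N := by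
    rw [div_le_iff₀ (by positivity)]
    calc _ ≤ _ := a2
      _ = _ := by rw [pow_add]; ring
  calc |τ| ^ k * F * (1 + (τ / N) ^ 2) = |τ| ^ k * F + |τ| ^ (k + 2) * F / N ^ 2 := by
        rw [pow_add, sq_abs]; ring
    _ ≤ C1 * N ^ k / N + C2 * N ^ k / N := add_le_add a1 a3
    _ = _ := by ring

/-- Fix z with Re z ≥ 0. For every k there is c_k > 0 such that for all s > 0, r > 0 and j,
∫_{|t| ≥ s} |ĥ^z_{j,r}(t)| dt ≤ c_k s^{−k} r^{−k} 2^{(k − Re z)j}, where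
ĥ^z_{j,r}(t) = ∫_ℝ h^z_{j,r}(ξ) e^{−itξ} dξ. -/
theorem hzjr_fourier_tail_bound (z : ℂ) (hz : 0 ≤ z.re) :
    ∀ k : ℕ, ∃ c : ℝ, 0 < c ∧ ∀ s r : ℝ, 0 < s → 0 < r → ∀ j : ℕ,
      (∫ t in {t : ℝ | s ≤ |t|},
          ‖∫ x : ℝ, hzjr z j r x * Complex.exp (-(Complex.I * t * x))‖) ≤
        c * s ^ (-(k : ℤ)) * r ^ (-(k : ℤ)) * (2 : ℝ) ^ (((k : ℝ) - z.re) * j) := by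
  intro k
  obtain ⟨C0, h0, H0⟩ := osc_final z k 0
  obtain ⟨C1, h1, H1⟩ := osc_final z k 1
  obtain ⟨C2, h2, H2⟩ := osc_final z k 2
  have HC : ∃ C : ℝ, 0 < C ∧ ∀ j : ℕ, ∀ N : ℝ, 1 ≤ N → ∀ τ : ℝ,
      |τ| ^ k * ‖oscInt (Bf z (min j 2)) (fun x => Complex.exp ((x : ℂ) ^ 2)) N τ‖ ≤
      C * N ^ k / N * (1 + (τ / N) ^ 2)⁻¹ := by
    refine ⟨C0 + C1 + C2 + 1, by positivity, fun j N hN τ => ?_⟩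
    have hN0 : 0 < N := by linarith
    have hj : min j 2 = 0 ∨ min j 2 = 1 ∨ min j 2 = 2 := by omega
    rcases hj with h | h | h <;> rw [h]
    · refine (H0 N hN τ).trans ?_
      gcongr
      linarith
    · refine (H1 N hN τ).trans ?_
      gcongr
      linarith
    · refine (H2 N hN τ).trans ?_
      gcongr
      linarith
  obtain ⟨C, hC, H⟩ := HC
  refine ⟨C * π, by positivity, fun s r hs hr j => ?_⟩
  have hN1 : (1:ℝ) ≤ 2 ^ j := one_le_pow₀ (by norm_num)
  have hN0 : (0:ℝ) < 2 ^ j := by positivity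
  set K : ℝ := r * ((2 ^ j : ℝ) ^ (-z.re) * ((r * s) ^ k)⁻¹ * (C * (2 ^ j) ^ k / 2 ^ j)) with hK
  have hK0 : 0 ≤ K := by positivity
  have hr2 : r / 2 ^ j ≠ 0 := by positivity
  have hint : Integrable (fun t : ℝ => K * (1 + (r / 2 ^ j * t) ^ 2)⁻¹) :=
    (integrable_inv_one_add_sq.comp_mul_left' hr2).const_mul K
  have hval : ∫ t : ℝ, K * (1 + (r / 2 ^ j * t) ^ 2)⁻¹ = K * (2 ^ j / r * π) := by
    rw [integral_const_mul, Measure.integral_comp_mul_left (fun t : ℝ => (1 + t ^ 2)⁻¹),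
      integral_univ_inv_one_add_sq, abs_of_pos (by positivity), smul_eq_mul, inv_div]
  have hms : MeasurableSet {t : ℝ | s ≤ |t|} :=
    measurableSet_le measurable_const continuous_abs.measurable
  calc _ ≤ ∫ t in {t : ℝ | s ≤ |t|}, K * (1 + (r / 2 ^ j * t) ^ 2)⁻¹ := by
        apply integral_mono_of_nonneg (Filter.Eventually.of_forall fun t => norm_nonneg _)
          hint.integrableOn
        filter_upwards [ae_restrict_mem hms] with t ht
        rw [hzjr_hat z j hr t, norm_mul, norm_mul, Complex.norm_real,
          Real.norm_of_nonneg hr.le, Complex.norm_cpow_eq_rpow_re_of_pos hN0, Complex.neg_re]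
        have hb := H j (2 ^ j) hN1 (r * t)
        set F := ‖oscInt (Bf z (min j 2)) (fun x => Complex.exp ((x : ℂ) ^ 2)) (2 ^ j) (r * t)‖
        have hF : F ≤ ((r * s) ^ k)⁻¹ *
            (C * (2 ^ j) ^ k / 2 ^ j * (1 + (r * t / 2 ^ j) ^ 2)⁻¹) := by
          rw [inv_mul_eq_div, le_div_iff₀ (by positivity), mul_comm]
          refine le_trans ?_ hb
          rw [abs_mul, abs_of_pos hr]
          have : 0 ≤ F := norm_nonneg _
          gcongr
        calc r * ((2 ^ j : ℝ) ^ (-z.re) * F) ≤ r * ((2 ^ j : ℝ) ^ (-z.re) * (((r * s) ^ k)⁻¹ *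
            (C * (2 ^ j) ^ k / 2 ^ j * (1 + (r * t / 2 ^ j) ^ 2)⁻¹))) := by gcongr
          _ = _ := by
            rw [hK, show r * t / 2 ^ j = r / 2 ^ j * t by ring]; ring
    _ ≤ ∫ t : ℝ, K * (1 + (r / 2 ^ j * t) ^ 2)⁻¹ :=
        setIntegral_le_integral hint (Filter.Eventually.of_forall fun t => by positivity)
    _ = K * (2 ^ j / r * π) := hval
    _ = _ := by
        have e : (2 : ℝ) ^ (((k : ℝ) - z.re) * j) = (2 ^ j) ^ k * (2 ^ j : ℝ) ^ (-z.re) := by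
          rw [← Real.rpow_natCast (2 ^ j) k, ← Real.rpow_add hN0, ← Real.rpow_natCast 2 j,
            ← Real.rpow_mul (by norm_num)]
          congr 1; ring
        rw [e, hK, zpow_neg, zpow_neg, zpow_natCast, zpow_natCast, mul_pow]
        field_simp
end

section
/- Let l ≥ 1 be an integer, ρ₀ ≥ 0, and z ∈ ℂ with Re z ≥ 0. For every multi-index α there exists a constant c = c(α, l, z) > 0 such that for all R > ρ₀² and all H ∈ ℝ^l with H ≠ 0, |∂_H^α [ 𝒥_{z+l/2}(√(R − ρ₀²) ‖H‖) ]| ≤ c (R − ρ₀²)^{|α|/2 − (Re z/2 + (l+1)/4)} ‖H‖^{−(Re z + (l+1)/2)}. -/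
open Real MeasureTheory

/-- 𝒥_ν(t) = (2^ν Γ(ν+1/2) Γ(1/2))^{−1} ∫_{−1}^1 e^{ist} (1−s²)^{ν−1/2} ds,
which for t > 0 equals t^{−ν} J_ν(t). -/
noncomputable def Jmod (ν : ℂ) (t : ℝ) : ℂ :=
  ((2 : ℂ) ^ ν * Complex.Gamma (ν + 1 / 2) * Complex.Gamma (1 / 2))⁻¹ *
    ∫ s in (-1 : ℝ)..1, Complex.exp (Complex.I * s * t) * ((1 - s ^ 2 : ℝ) : ℂ) ^ (ν - 1 / 2)

/-- Iterated partial derivative of a function on ℝ^l along a list of coordinate directions. -/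
noncomputable def mderiv {l : ℕ} : List (Fin l) → (EuclideanSpace ℝ (Fin l) → ℂ) →
    EuclideanSpace ℝ (Fin l) → ℂ
  | [], f => f
  | i :: L, f => fun x => fderiv ℝ (mderiv L f) x (EuclideanSpace.single i 1)

/-- The partial derivative ∂^α of a function on ℝ^l associated with the multi-index
α : Fin l → ℕ (α i derivatives in the i-th coordinate direction). -/
noncomputable def partialD {l : ℕ} (α : Fin l → ℕ) (f : EuclideanSpace ℝ (Fin l) → ℂ) :
    EuclideanSpace ℝ (Fin l) → ℂ :=
  mderiv ((List.finRange l).flatMap fun i => List.replicate (α i) i) f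


noncomputable def wgt (ν : ℂ) (s : ℝ) : ℂ := ((1 - s ^ 2 : ℝ) : ℂ) ^ (ν - 1 / 2)

lemma wgt_meas (ν : ℂ) : Measurable (wgt ν) := by
  unfold wgt; fun_prop

lemma one_sub_sq_nonneg {s : ℝ} (hs : s ∈ Set.Icc (-1 : ℝ) 1) : 0 ≤ 1 - s ^ 2 := by
  nlinarith [hs.1, hs.2]

lemma wgt_norm (ν : ℂ) (hν : 1 / 2 ≤ ν.re) (s : ℝ) (hs : s ∈ Set.Icc (-1 : ℝ) 1) :
    ‖wgt ν s‖ ≤ 1 := by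
  unfold wgt
  have h0 := one_sub_sq_nonneg hs
  rcases h0.eq_or_lt with h | h
  · rw [← h]
    by_cases hz : ν - 1 / 2 = 0
    · rw [hz]; simp
    · rw [Complex.ofReal_zero, Complex.zero_cpow hz]; simp
  · rw [Complex.norm_cpow_eq_rpow_re_of_pos h]
    apply Real.rpow_le_one h0
    · nlinarith [sq_nonneg s]
    · simp; linarith

lemma wgt_succ (ν : ℂ) (hν : 1 / 2 ≤ ν.re) (s : ℝ) (hs : s ∈ Set.Icc (-1 : ℝ) 1) :
    wgt (ν + 1) s = (1 - (s : ℂ) ^ 2) * wgt ν s := by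
  unfold wgt
  have h0 := one_sub_sq_nonneg hs
  have e : ((1 - s ^ 2 : ℝ) : ℂ) = 1 - (s : ℂ) ^ 2 := by push_cast; ring
  rcases h0.eq_or_lt with h | h
  · have hz : ν + 1 - 1 / 2 ≠ 0 := by
      intro hh
      have := congrArg Complex.re hh
      simp at this; linarith
    rw [← e, ← h, Complex.ofReal_zero, Complex.zero_cpow hz]; simp
  · have hne : ((1 - s ^ 2 : ℝ) : ℂ) ≠ 0 := by exact_mod_cast h.ne'
    rw [show ν + 1 - 1 / 2 = (ν - 1 / 2) + 1 by ring, Complex.cpow_add _ _ hne, Complex.cpow_one, e]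
    ring

lemma norm_expI (s t : ℝ) : ‖Complex.exp (Complex.I * s * t)‖ = 1 := by
  rw [show Complex.I * s * t = ((s * t : ℝ) : ℂ) * Complex.I by push_cast; ring]
  exact Complex.norm_exp_ofReal_mul_I _

lemma ii_of_bdd (h : ℝ → ℂ) (hm : Measurable h) (C : ℝ)
    (hb : ∀ s ∈ Set.Icc (-1 : ℝ) 1, ‖h s‖ ≤ C) :
    IntervalIntegrable h volume (-1) 1 := by
  rw [intervalIntegrable_iff_integrableOn_Icc_of_le (by norm_num)]
  refine Measure.integrableOn_of_bounded (M := C) (by simp) hm.aestronglyMeasurable ?_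
  exact (ae_restrict_iff' measurableSet_Icc).2 (Filter.Eventually.of_forall hb)

lemma hasDeriv_osc (h : ℝ → ℂ) (hm : Measurable h)
    (hb : ∀ s ∈ Set.Icc (-1 : ℝ) 1, ‖h s‖ ≤ 1) (t : ℝ) :
    HasDerivAt (fun t : ℝ => ∫ s in (-1 : ℝ)..1, Complex.exp (Complex.I * s * t) * h s)
      (∫ s in (-1 : ℝ)..1, Complex.exp (Complex.I * s * t) * (Complex.I * s * h s)) t := by
  have hsub : ∀ s ∈ Set.uIoc (-1 : ℝ) 1, s ∈ Set.Icc (-1 : ℝ) 1 := by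
    intro s hs
    rw [Set.uIoc_of_le (by norm_num)] at hs
    exact ⟨hs.1.le, hs.2⟩
  refine (intervalIntegral.hasDerivAt_integral_of_dominated_loc_of_deriv_le
    (F := fun (t : ℝ) (s : ℝ) => Complex.exp (Complex.I * s * t) * h s)
    (F' := fun (t : ℝ) (s : ℝ) => Complex.exp (Complex.I * s * t) * (Complex.I * s * h s))
    (bound := fun _ => 1) (s := Set.univ) Filter.univ_mem ?_ ?_ ?_ ?_ ?_ ?_).2
  · refine Filter.Eventually.of_forall fun t => Measurable.aestronglyMeasurable ?_
    fun_prop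
  · refine ii_of_bdd _ (by fun_prop) 1 fun s hs => ?_
    rw [norm_mul, norm_expI, one_mul]; exact hb s hs
  · refine Measurable.aestronglyMeasurable ?_
    fun_prop
  · refine Filter.Eventually.of_forall fun s hs x _ => ?_
    have hs' := hsub s hs
    rw [norm_mul, norm_expI, one_mul, norm_mul, norm_mul, Complex.norm_I, one_mul, Complex.norm_real]
    have : ‖s‖ ≤ 1 := by rw [Real.norm_eq_abs, abs_le]; exact hs'
    calc ‖s‖ * ‖h s‖ ≤ 1 * 1 := by gcongr; exact hb s hs'
      _ = 1 := by norm_num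
  · simp
  · refine Filter.Eventually.of_forall fun s hs x _ => ?_
    have h1 : HasDerivAt (fun t : ℝ => Complex.I * s * (t : ℂ)) (Complex.I * s) x := by
      simpa using (Complex.ofRealCLM.hasDerivAt (x := x)).const_mul (Complex.I * s)
    refine ((h1.cexp).mul_const (h s)).congr_deriv ?_
    ring

lemma wgt_hasDeriv (ν : ℂ) (s : ℝ) (hs : s ∈ Set.Ioo (-1 : ℝ) 1) :
    HasDerivAt (wgt (ν + 1)) (-(2 * ν + 1) * s * wgt ν s) s := by
  have h : 0 < 1 - s ^ 2 := by nlinarith [hs.1, hs.2]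
  have h1 : HasDerivAt (fun s : ℝ => ((1 - s ^ 2 : ℝ) : ℂ)) ((-(2 * s) : ℝ) : ℂ) s := by
    refine HasDerivAt.ofReal_comp ?_
    simpa using ((hasDerivAt_id s).pow 2).const_sub 1
  have h3 : HasDerivAt (fun z : ℂ => z ^ (ν + 1 - 1 / 2))
      ((ν + 1 - 1 / 2) * ((1 - s ^ 2 : ℝ) : ℂ) ^ (ν + 1 - 1 / 2 - 1) * 1) ((1 - s ^ 2 : ℝ) : ℂ) :=
    (hasDerivAt_id _).cpow_const (Complex.ofReal_mem_slitPlane.2 h)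
  refine (HasDerivAt.comp s h3 h1).congr_deriv ?_
  unfold wgt
  rw [show ν + 1 - 1 / 2 - 1 = ν - 1 / 2 by ring]
  push_cast
  ring

lemma wgt_ibp (ν : ℂ) (hν : 1 / 2 ≤ ν.re) (t : ℝ) :
    (2 * ν + 1) * ∫ s in (-1 : ℝ)..1, Complex.exp (Complex.I * s * t) * (Complex.I * s * wgt ν s) =
      - t * ∫ s in (-1 : ℝ)..1, Complex.exp (Complex.I * s * t) * wgt (ν + 1) s := by
  have hν1 : 1 / 2 ≤ (ν + 1).re := by simp; linarith
  have i1 : IntervalIntegrable (fun s : ℝ => Complex.exp (Complex.I * s * t) * (Complex.I * s * wgt ν s))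
      volume (-1) 1 := by
    refine ii_of_bdd _ (by have := wgt_meas ν; fun_prop) 1 fun s hs => ?_
    rw [norm_mul, norm_expI, one_mul, norm_mul, norm_mul, Complex.norm_I, one_mul, Complex.norm_real]
    have : ‖s‖ ≤ 1 := by rw [Real.norm_eq_abs, abs_le]; exact hs
    calc ‖s‖ * ‖wgt ν s‖ ≤ 1 * 1 := by gcongr; exact wgt_norm ν hν s hs
      _ = 1 := by norm_num
  have i2 : IntervalIntegrable (fun s : ℝ => Complex.exp (Complex.I * s * t) * wgt (ν + 1) s)
      volume (-1) 1 := by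
    refine ii_of_bdd _ (by have := wgt_meas (ν+1); fun_prop) 1 fun s hs => ?_
    rw [norm_mul, norm_expI, one_mul]
    exact wgt_norm _ hν1 s hs
  have key := intervalIntegral.integral_eq_sub_of_hasDerivAt_of_le (a := -1) (b := 1)
    (f := fun s : ℝ => Complex.exp (Complex.I * s * t) * wgt (ν + 1) s)
    (f' := fun s : ℝ => (Complex.I * t) * (Complex.exp (Complex.I * s * t) * wgt (ν + 1) s)
      + (Complex.I * (2 * ν + 1)) * (Complex.exp (Complex.I * s * t) * (Complex.I * s * wgt ν s)))
    (by norm_num) ?_ ?_ ((i2.const_mul _).add (i1.const_mul _))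
  · rw [intervalIntegral.integral_add (i2.const_mul _) (i1.const_mul _),
      intervalIntegral.integral_const_mul, intervalIntegral.integral_const_mul] at key
    have hz : ν + 1 - 1 / 2 ≠ 0 := by
      intro hh
      have := congrArg Complex.re hh
      simp at this; linarith
    have e1 : wgt (ν + 1) 1 = 0 := by unfold wgt; simp [-one_div, Complex.zero_cpow hz]
    have e2 : wgt (ν + 1) (-1) = 0 := by unfold wgt; simp [-one_div, Complex.zero_cpow hz]
    simp only [e1, e2, mul_zero, sub_zero] at key
    apply mul_left_cancel₀ Complex.I_ne_zero
    linear_combination key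
  · apply Continuous.continuousOn
    have : Continuous (wgt (ν + 1)) := by
      have hc := Complex.continuous_ofReal_cpow_const (y := ν + 1 - 1 / 2) (by simp; linarith)
      exact hc.comp (g := fun x : ℝ => (x : ℂ) ^ (ν + 1 - 1 / 2)) (f := fun s : ℝ => 1 - s ^ 2) (by fun_prop)
    fun_prop
  · intro s hs
    have h1 : HasDerivAt (fun s : ℝ => Complex.I * (s : ℂ) * t) (Complex.I * t) s := by
      simpa using ((Complex.ofRealCLM.hasDerivAt (x := s)).const_mul Complex.I).mul_const (t : ℂ)
    refine (h1.cexp.mul (wgt_hasDeriv ν s hs)).congr_deriv ?_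
    linear_combination -(2 * ν + 1) * Complex.exp (Complex.I * s * t) * s * wgt ν s * Complex.I_mul_I

noncomputable def cst (ν : ℂ) : ℂ :=
  ((2 : ℂ) ^ ν * Complex.Gamma (ν + 1 / 2) * Complex.Gamma (1 / 2))⁻¹

lemma Jmod_eq (ν : ℂ) (t : ℝ) : Jmod ν t =
    cst ν * ∫ s in (-1 : ℝ)..1, Complex.exp (Complex.I * s * t) * wgt ν s := rfl

lemma cst_succ (ν : ℂ) (hν : 1 / 2 ≤ ν.re) : (2 * ν + 1) * cst (ν + 1) = cst ν := by
  have hne : ν + 1 / 2 ≠ 0 := by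
    intro hh
    have := congrArg Complex.re hh
    simp at this; linarith
  unfold cst
  rw [show ν + 1 + 1 / 2 = (ν + 1 / 2) + 1 by ring, Complex.Gamma_add_one _ hne,
    Complex.cpow_add _ _ two_ne_zero, Complex.cpow_one,
    show 2 * ν + 1 = 2 * (ν + 1 / 2) by ring, mul_inv, mul_inv, mul_inv, mul_inv, mul_inv, mul_inv]
  have h2 : (2 * ν + 1) ≠ 0 := by
    intro hh; apply hne; linear_combination hh / 2
  field_simp

lemma two_nu_ne (ν : ℂ) (hν : 1 / 2 ≤ ν.re) : 2 * ν + 1 ≠ 0 := by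
  intro hh
  have := congrArg Complex.re hh
  simp at this; linarith

lemma dJ_eq (ν : ℂ) (hν : 1 / 2 ≤ ν.re) (t : ℝ) :
    cst ν * ∫ s in (-1 : ℝ)..1, Complex.exp (Complex.I * s * t) * (Complex.I * s * wgt ν s) =
      -t * Jmod (ν + 1) t := by
  rw [Jmod_eq, ← cst_succ ν hν]
  linear_combination cst (ν + 1) * wgt_ibp ν hν t

lemma Jmod_deriv (ν : ℂ) (hν : 1 / 2 ≤ ν.re) (t : ℝ) :
    HasDerivAt (Jmod ν) (-t * Jmod (ν + 1) t) t := by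
  rw [← dJ_eq ν hν]
  exact (hasDeriv_osc (wgt ν) (wgt_meas ν) (wgt_norm ν hν) t).const_mul (cst ν)

lemma Jmod_deriv2 (ν : ℂ) (hν : 1 / 2 ≤ ν.re) (t : ℝ) :
    HasDerivAt (fun t : ℝ => -(t : ℂ) * Jmod (ν + 1) t)
      ((2 * ν + 1) * Jmod (ν + 1) t - Jmod ν t) t := by
  have hν1 : 1 / 2 ≤ (ν + 1).re := by simp; linarith
  have hm := wgt_meas ν
  have := (hasDeriv_osc (fun s => Complex.I * s * wgt ν s) (by fun_prop) (by
    intro s hs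
    rw [norm_mul, norm_mul, Complex.norm_I, one_mul, Complex.norm_real]
    have : ‖s‖ ≤ 1 := by rw [Real.norm_eq_abs, abs_le]; exact hs
    calc ‖s‖ * ‖wgt ν s‖ ≤ 1 * 1 := by gcongr; exact wgt_norm ν hν s hs
      _ = 1 := by norm_num) t).const_mul (cst ν)
  have e : (fun t : ℝ => -(t : ℂ) * Jmod (ν + 1) t) = fun t : ℝ => cst ν *
      ∫ s in (-1 : ℝ)..1, Complex.exp (Complex.I * s * t) * (Complex.I * s * wgt ν s) := by
    funext t; rw [dJ_eq ν hν]
  rw [e]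
  refine this.congr_deriv ?_
  symm
  have i1 : IntervalIntegrable (fun s : ℝ => Complex.exp (Complex.I * s * t) * wgt ν s)
      volume (-1) 1 := by
    refine ii_of_bdd _ (by fun_prop) 1 fun s hs => ?_
    rw [norm_mul, norm_expI, one_mul]
    exact wgt_norm _ hν s hs
  have i2 : IntervalIntegrable (fun s : ℝ => Complex.exp (Complex.I * s * t) * wgt (ν + 1) s)
      volume (-1) 1 := by
    refine ii_of_bdd _ (by have := wgt_meas (ν+1); fun_prop) 1 fun s hs => ?_
    rw [norm_mul, norm_expI, one_mul]
    exact wgt_norm _ hν1 s hs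
  rw [Jmod_eq, Jmod_eq, ← mul_assoc, cst_succ ν hν, ← mul_sub, ← intervalIntegral.integral_sub i2 i1]
  congr 1
  refine intervalIntegral.integral_congr fun s hs => ?_
  rw [Set.uIcc_of_le (by norm_num)] at hs
  simp only [wgt_succ ν hν s hs]
  linear_combination - Complex.exp (Complex.I * s * t) * s ^ 2 * wgt ν s * Complex.I_mul_I

lemma Jmod_bdd (ν : ℂ) (hν : 1 / 2 ≤ ν.re) (t : ℝ) : ‖Jmod ν t‖ ≤ ‖cst ν‖ * 2 := by
  rw [Jmod_eq, norm_mul]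
  gcongr
  have := intervalIntegral.norm_integral_le_of_norm_le_const (a := -1) (b := 1) (C := 1)
    (f := fun s : ℝ => Complex.exp (Complex.I * s * t) * wgt ν s) (by
      intro s hs
      rw [Set.uIoc_of_le (by norm_num)] at hs
      rw [norm_mul, norm_expI, one_mul]
      exact wgt_norm ν hν s ⟨hs.1.le, hs.2⟩)
  refine this.trans (by norm_num)

lemma energy_bound (V W : ℝ → ℂ) (κ : ℂ) (hV : ∀ t : ℝ, 0 < t → HasDerivAt V (W t) t)
    (hW : ∀ t : ℝ, 0 < t → HasDerivAt W ((κ / (t : ℂ) ^ 2) * V t - V t) t) (t : ℝ) (ht : 1 ≤ t) :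
    ‖V t‖ ^ 2 ≤ (‖V 1‖ ^ 2 + ‖W 1‖ ^ 2) * Real.exp ‖κ‖ := by
  set h : ℝ → ℝ := fun t => (‖V t‖ ^ 2 + ‖W t‖ ^ 2) * Real.exp (‖κ‖ * t⁻¹) with hh
  have hd : ∀ t : ℝ, 0 < t → HasDerivAt h
      ((2 * inner ℝ (V t) (W t) + 2 * inner ℝ (W t) ((κ / (t : ℂ) ^ 2) * V t - V t)) *
        Real.exp (‖κ‖ * t⁻¹) + (‖V t‖ ^ 2 + ‖W t‖ ^ 2) *
          (Real.exp (‖κ‖ * t⁻¹) * (‖κ‖ * (-(t ^ 2)⁻¹)))) t := by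
    intro t ht
    exact ((hV t ht).norm_sq.add (hW t ht).norm_sq).mul
      (((hasDerivAt_inv ht.ne').const_mul ‖κ‖).exp)
  have hanti : AntitoneOn h (Set.Ici 1) := by
    apply antitoneOn_of_deriv_nonpos (convex_Ici 1)
    · intro x hx
      exact (hd x (lt_of_lt_of_le one_pos hx)).continuousAt.continuousWithinAt
    · intro x hx
      rw [interior_Ici] at hx
      exact (hd x (lt_trans one_pos hx)).differentiableAt.differentiableWithinAt
    · intro x hx
      rw [interior_Ici] at hx
      have hx0 : 0 < x := lt_trans one_pos hx
      rw [(hd x hx0).deriv, inner_sub_right, real_inner_comm (W x) (V x)]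
      have h1 := real_inner_le_norm (W x) ((κ / (x : ℂ) ^ 2) * V x)
      rw [norm_mul, norm_div, norm_pow, Complex.norm_real, Real.norm_eq_abs, abs_of_pos hx0] at h1
      have h2 : 0 ≤ ‖κ‖ / x ^ 2 := by positivity
      have h3 := Real.exp_pos (‖κ‖ * x⁻¹)
      have h4 : 2 * inner ℝ (W x) ((κ / (x : ℂ) ^ 2) * V x) ≤
          (‖V x‖ ^ 2 + ‖W x‖ ^ 2) * (‖κ‖ / x ^ 2) := by
        nlinarith [mul_nonneg h2 (sq_nonneg (‖V x‖ - ‖W x‖))]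
      have h5 := mul_le_mul_of_nonneg_right h4 h3.le
      rw [div_eq_mul_inv ‖κ‖] at h5
      linarith
  have := hanti (Set.mem_Ici.2 le_rfl) (Set.mem_Ici.2 ht) ht
  simp only [hh, inv_one, mul_one] at this
  refine le_trans ?_ this
  have h1 : 1 ≤ Real.exp (‖κ‖ * t⁻¹) := Real.one_le_exp (by positivity)
  nlinarith [sq_nonneg ‖V t‖, sq_nonneg ‖W t‖]

lemma Jmod_large (ν : ℂ) (hν : 1 / 2 ≤ ν.re) : ∃ C : ℝ, 0 ≤ C ∧ ∀ t : ℝ, 1 ≤ t →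
    ‖Jmod ν t‖ ≤ C * t ^ (-(ν.re + 1 / 2)) := by
  set b : ℂ := ν + 1 / 2 with hb
  set V : ℝ → ℂ := fun t => (t : ℂ) ^ b * Jmod ν t with hV
  set W : ℝ → ℂ := fun t => (t : ℂ) ^ b * (-(t : ℂ) * Jmod (ν + 1) t) +
    b * ((t : ℂ) ^ (b - 1) * Jmod ν t) with hW
  have hp : ∀ c : ℂ, ∀ t : ℝ, 0 < t →
      HasDerivAt (fun t : ℝ => (t : ℂ) ^ c) (c * (t : ℂ) ^ (c - 1)) t := by
    intro c t ht
    have h3 : HasDerivAt (fun z : ℂ => z ^ c) (c * (t : ℂ) ^ (c - 1) * 1) (t : ℂ) :=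
      (hasDerivAt_id _).cpow_const (Complex.ofReal_mem_slitPlane.2 ht)
    simpa using h3.comp_ofReal
  have dV : ∀ t : ℝ, 0 < t → HasDerivAt V (W t) t := by
    intro t ht
    refine ((hp b t ht).mul (Jmod_deriv ν hν t)).congr_deriv ?_
    simp only [hW]; ring
  have dW : ∀ t : ℝ, 0 < t →
      HasDerivAt W (((b ^ 2 - b) / (t : ℂ) ^ 2) * V t - V t) t := by
    intro t ht
    have ht0 : (t : ℂ) ≠ 0 := by exact_mod_cast ht.ne'
    refine (((hp b t ht).mul (Jmod_deriv2 ν hν t)).add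
      (((hp (b - 1) t ht).mul (Jmod_deriv ν hν t)).const_mul b)).congr_deriv ?_
    have e1 : (t : ℂ) ^ (b - 1) = (t : ℂ) ^ b / t := by
      rw [Complex.cpow_sub _ _ ht0, Complex.cpow_one]
    have e2 : (t : ℂ) ^ (b - 1 - 1) = (t : ℂ) ^ b / t / t := by
      rw [Complex.cpow_sub _ _ ht0, Complex.cpow_one, e1]
    simp only [hV, e1, e2]
    rw [show ν = b - 1 / 2 by rw [hb]; ring]
    field_simp
    ring
  set M := (‖V 1‖ ^ 2 + ‖W 1‖ ^ 2) * Real.exp ‖b ^ 2 - b‖ with hM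
  refine ⟨Real.sqrt M, Real.sqrt_nonneg _, fun t ht => ?_⟩
  have ht0 : 0 < t := lt_of_lt_of_le one_pos ht
  have h1 := energy_bound V W (b ^ 2 - b) dV dW t ht
  have h2 : ‖V t‖ ≤ Real.sqrt M := Real.le_sqrt_of_sq_le h1
  have h3 : ‖V t‖ = t ^ (ν.re + 1 / 2) * ‖Jmod ν t‖ := by
    simp only [hV, norm_mul, Complex.norm_cpow_eq_rpow_re_of_pos ht0, hb]
    simp
  rw [h3] at h2
  rw [Real.rpow_neg ht0.le, ← div_eq_mul_inv, le_div_iff₀ (Real.rpow_pos_of_pos ht0 _), mul_comm]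
  exact h2

lemma Jmod_decay (ν : ℂ) (hν : 1 / 2 ≤ ν.re) : ∃ C : ℝ, 0 ≤ C ∧ ∀ t : ℝ, 0 < t →
    ‖Jmod ν t‖ ≤ C * (1 + t) ^ (-(ν.re + 1 / 2)) := by
  obtain ⟨C, hC, h⟩ := Jmod_large ν hν
  set a := ν.re + 1 / 2
  have ha : 0 < a := by simp only [a]; linarith
  refine ⟨(C + ‖cst ν‖ * 2) * 2 ^ a, by positivity, fun t ht => ?_⟩
  have key : ∀ u : ℝ, 0 < u → (1 + t) / 2 ≤ u → u ^ (-a) ≤ 2 ^ a * (1 + t) ^ (-a) := by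
    intro u hu hle
    have := Real.rpow_le_rpow_of_nonpos (by positivity) hle (by linarith : -a ≤ 0)
    refine this.trans (le_of_eq ?_)
    rw [Real.div_rpow (by positivity) (by positivity), Real.rpow_neg (by norm_num : (0:ℝ) ≤ 2)]
    field_simp
  rcases le_total 1 t with h1 | h1
  · calc ‖Jmod ν t‖ ≤ C * t ^ (-a) := h t h1
      _ ≤ (C + ‖cst ν‖ * 2) * (2 ^ a * (1 + t) ^ (-a)) := by
        gcongr
        · have := norm_nonneg (cst ν); linarith
        · exact key t ht (by linarith)
      _ = _ := by ring
  · calc ‖Jmod ν t‖ ≤ (‖cst ν‖ * 2) * 1 ^ (-a) := by simpa using Jmod_bdd ν hν t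
      _ ≤ (C + ‖cst ν‖ * 2) * (2 ^ a * (1 + t) ^ (-a)) := by
        gcongr
        · linarith
        · exact key 1 one_pos (by linarith)
      _ = _ := by ring

inductive TT {l : ℕ} (ν : ℂ) : ℕ → (EuclideanSpace ℝ (Fin l) → ℂ) → Prop
  | base (k : ℕ) : TT ν k (fun x => Jmod (ν + k) ‖x‖)
  | mulX (d : ℕ) (A : EuclideanSpace ℝ (Fin l) → ℂ) (j : Fin l) :
      TT ν (d + 1) A → TT ν d (fun x => ((x j : ℝ) : ℂ) * A x)
  | add (d : ℕ) (A B : EuclideanSpace ℝ (Fin l) → ℂ) :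
      TT ν d A → TT ν d B → TT ν d (fun x => A x + B x)
  | weaken (d : ℕ) (A : EuclideanSpace ℝ (Fin l) → ℂ) : TT ν (d + 1) A → TT ν d A
  | cmul (d : ℕ) (A : EuclideanSpace ℝ (Fin l) → ℂ) (c : ℂ) : TT ν d A → TT ν d (fun x => c * A x)
  | congr (d : ℕ) (A B : EuclideanSpace ℝ (Fin l) → ℂ) :
      TT ν d A → (∀ x, x ≠ 0 → A x = B x) → TT ν d B

lemma TT.bound {l : ℕ} {ν : ℂ} (hν : 1 / 2 ≤ ν.re) {d : ℕ} {A : EuclideanSpace ℝ (Fin l) → ℂ}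
    (h : TT ν d A) : ∃ C : ℝ, 0 ≤ C ∧ ∀ x, x ≠ 0 →
      ‖A x‖ ≤ C * (1 + ‖x‖) ^ (-(ν.re + 1 / 2 + d)) := by
  induction h with
  | base k =>
    obtain ⟨C, hC, h⟩ := Jmod_decay (ν + k) (by simp; linarith [(Nat.cast_nonneg k : (0:ℝ) ≤ k)])
    refine ⟨C, hC, fun x hx => (h ‖x‖ (norm_pos_iff.2 hx)).trans (le_of_eq ?_)⟩
    congr 2
    simp; ring
  | mulX d A j _ ih =>
    obtain ⟨C, hC, h⟩ := ih
    refine ⟨C, hC, fun x hx => ?_⟩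
    have hp : 0 < 1 + ‖x‖ := by positivity
    rw [norm_mul, Complex.norm_real]
    have h1 : ‖x j‖ ≤ 1 + ‖x‖ := (PiLp.norm_apply_le x j).trans (by linarith)
    calc ‖x j‖ * ‖A x‖ ≤ (1 + ‖x‖) * (C * (1 + ‖x‖) ^ (-(ν.re + 1 / 2 + ((d + 1 : ℕ) : ℝ)))) := by
          gcongr; exact h x hx
      _ = C * ((1 + ‖x‖) ^ (1 : ℝ) * (1 + ‖x‖) ^ (-(ν.re + 1 / 2 + ((d + 1 : ℕ) : ℝ)))) := by
          rw [Real.rpow_one]; ring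
      _ = _ := by
          rw [← Real.rpow_add hp]; congr 2; push_cast; ring
  | add d A B _ _ ih1 ih2 =>
    obtain ⟨C, hC, h⟩ := ih1
    obtain ⟨C', hC', h'⟩ := ih2
    refine ⟨C + C', by positivity, fun x hx => (norm_add_le _ _).trans ?_⟩
    rw [add_mul]
    exact add_le_add (h x hx) (h' x hx)
  | weaken d A _ ih =>
    obtain ⟨C, hC, h⟩ := ih
    refine ⟨C, hC, fun x hx => (h x hx).trans ?_⟩
    gcongr
    · linarith [norm_nonneg x]
    · linarith
  | cmul d A c _ ih =>
    obtain ⟨C, hC, h⟩ := ih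
    refine ⟨‖c‖ * C, by positivity, fun x hx => ?_⟩
    rw [norm_mul, mul_assoc]
    gcongr
    exact h x hx
  | congr d A B _ hAB ih =>
    obtain ⟨C, hC, h⟩ := ih
    exact ⟨C, hC, fun x hx => hAB x hx ▸ h x hx⟩

lemma Jmod_norm_fderiv {l : ℕ} (ν : ℂ) (hν : 1 / 2 ≤ ν.re) (x : EuclideanSpace ℝ (Fin l))
    (hx : x ≠ 0) (i : Fin l) :
    DifferentiableAt ℝ (fun x : EuclideanSpace ℝ (Fin l) => Jmod ν ‖x‖) x ∧
    fderiv ℝ (fun x : EuclideanSpace ℝ (Fin l) => Jmod ν ‖x‖) x (EuclideanSpace.single i 1) =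
      -1 * (((x i : ℝ) : ℂ) * Jmod (ν + 1) ‖x‖) := by
  have hn : ‖x‖ ≠ 0 := norm_ne_zero_iff.2 hx
  have h1 := (hasStrictFDerivAt_norm_sq x).hasFDerivAt.sqrt (by positivity)
  simp only [Real.sqrt_sq (norm_nonneg _)] at h1
  have h2 := HasFDerivAt.comp x (Jmod_deriv ν hν ‖x‖).hasFDerivAt h1
  refine ⟨h2.differentiableAt, ?_⟩
  have h3 := h2.fderiv
  rw [show (fun x : EuclideanSpace ℝ (Fin l) => Jmod ν ‖x‖) = Jmod ν ∘ (fun x => ‖x‖) from rfl, h3]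
  have hc : (‖x‖ : ℂ) ≠ 0 := by exact_mod_cast hn
  simp [EuclideanSpace.inner_single_right]
  field_simp

lemma TT.deriv {l : ℕ} {ν : ℂ} (hν : 1 / 2 ≤ ν.re) {d : ℕ} {A : EuclideanSpace ℝ (Fin l) → ℂ}
    (h : TT ν d A) (i : Fin l) : ∃ B, TT ν d B ∧ ∀ x, x ≠ 0 → DifferentiableAt ℝ A x ∧
      fderiv ℝ A x (EuclideanSpace.single i 1) = B x := by
  induction h with
  | base k =>
    refine ⟨_, TT.cmul k _ (-1) (TT.mulX k _ i (TT.base (k + 1))), fun x hx => ?_⟩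
    have := Jmod_norm_fderiv (ν + k) (by simp; linarith [(Nat.cast_nonneg k : (0:ℝ) ≤ k)]) x hx i
    refine ⟨this.1, this.2.trans ?_⟩
    push_cast
    rw [add_assoc]
  | mulX d A j hA ih =>
    obtain ⟨B, hB, h⟩ := ih
    refine ⟨_, TT.add d _ _ (TT.cmul d _ (((EuclideanSpace.single i (1 : ℝ) : EuclideanSpace ℝ (Fin l)) j : ℝ) : ℂ)
      (TT.weaken d _ hA)) (TT.mulX d _ j hB), fun x hx => ?_⟩
    have h1 : HasFDerivAt (fun x : EuclideanSpace ℝ (Fin l) => ((x j : ℝ) : ℂ))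
      (Complex.ofRealCLM.comp (EuclideanSpace.proj (𝕜 := ℝ) j)) x :=
      (Complex.ofRealCLM.comp (EuclideanSpace.proj (𝕜 := ℝ) j)).hasFDerivAt
    have h2 := h1.mul (h x hx).1.hasFDerivAt
    refine ⟨h2.differentiableAt, ?_⟩
    rw [show (fun x : EuclideanSpace ℝ (Fin l) => ((x j : ℝ) : ℂ) * A x) =
      (fun x : EuclideanSpace ℝ (Fin l) => ((x j : ℝ) : ℂ)) * A from rfl, h2.fderiv]
    simp only [add_apply, smul_apply, (h x hx).2,
      ContinuousLinearMap.comp_apply, smul_eq_mul, Complex.ofRealCLM_apply]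
    rw [add_comm, mul_comm (A x)]
    rfl
  | add d A B _ _ ih1 ih2 =>
    obtain ⟨A', hA', h⟩ := ih1
    obtain ⟨B', hB', h'⟩ := ih2
    refine ⟨_, TT.add d _ _ hA' hB', fun x hx => ?_⟩
    have h2 := (h x hx).1.hasFDerivAt.add (h' x hx).1.hasFDerivAt
    refine ⟨h2.differentiableAt, ?_⟩
    rw [show (fun x => A x + B x) = A + B from rfl, h2.fderiv]
    simp only [add_apply, (h x hx).2, (h' x hx).2]
  | weaken d A _ ih =>
    obtain ⟨B, hB, h⟩ := ih
    exact ⟨B, TT.weaken d _ hB, h⟩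
  | cmul d A c _ ih =>
    obtain ⟨B, hB, h⟩ := ih
    refine ⟨_, TT.cmul d _ c hB, fun x hx => ?_⟩
    have h2 := (h x hx).1.hasFDerivAt.const_mul c
    refine ⟨h2.differentiableAt, ?_⟩
    rw [h2.fderiv]
    simp only [smul_apply, (h x hx).2, smul_eq_mul]
  | congr d A B _ hAB ih =>
    obtain ⟨A', hA', h⟩ := ih
    refine ⟨A', hA', fun x hx => ?_⟩
    have he : B =ᶠ[nhds x] A := by
      filter_upwards [isOpen_ne.mem_nhds hx] with y hy using (hAB y hy).symm
    refine ⟨(h x hx).1.congr_of_eventuallyEq he, ?_⟩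
    rw [he.fderiv_eq]
    exact (h x hx).2

lemma TT.mderiv {l : ℕ} {ν : ℂ} (hν : 1 / 2 ≤ ν.re) (L : List (Fin l)) :
    TT ν 0 (mderiv L (fun x : EuclideanSpace ℝ (Fin l) => Jmod ν ‖x‖)) := by
  induction L with
  | nil => simpa [_root_.mderiv] using TT.base (l := l) (ν := ν) 0
  | cons i L ih =>
    obtain ⟨B, hB, h⟩ := ih.deriv hν i
    exact TT.congr 0 B _ hB fun x hx => (h x hx).2.symm

lemma mderiv_scale {l : ℕ} (L : List (Fin l)) (f : EuclideanSpace ℝ (Fin l) → ℂ) (r : ℝ) :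
    mderiv L (fun x => f (r • x)) = fun x => r ^ L.length • mderiv L f (r • x) := by
  induction L with
  | nil => simp [mderiv]
  | cons i L ih =>
    funext x
    simp only [mderiv]
    rw [ih, show (fun x => r ^ L.length • mderiv L f (r • x)) =
      r ^ L.length • (fun x => mderiv L f (r • x)) from rfl, fderiv_const_smul_field, Pi.smul_apply,
      fderiv_comp_smul, List.length_cons, pow_succ, smul_smul]
    simp
/-- Bound for multi-index derivatives of H ↦ 𝒥_{z+l/2}(√(R−ρ₀²)‖H‖):
|∂_H^α 𝒥_{z+l/2}(√(R−ρ₀²)‖H‖)| ≤ c (R−ρ₀²)^{|α|/2 − (Re z/2 + (l+1)/4)} ‖H‖^{−(Re z + (l+1)/2)}. -/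
theorem Jmod_multiindex_deriv_bound (l : ℕ) (hl : 1 ≤ l) (ρ₀ : ℝ) (hρ : 0 ≤ ρ₀)
    (z : ℂ) (hz : 0 ≤ z.re) :
    ∀ α : Fin l → ℕ, ∃ c : ℝ, 0 < c ∧ ∀ R : ℝ, ρ₀ ^ 2 < R →
      ∀ H : EuclideanSpace ℝ (Fin l), H ≠ 0 →
        ‖partialD α
            (fun H' => Jmod (z + l / 2) (Real.sqrt (R - ρ₀ ^ 2) * ‖H'‖)) H‖ ≤
          c * (R - ρ₀ ^ 2) ^ ((∑ i, α i : ℝ) / 2 - (z.re / 2 + ((l : ℝ) + 1) / 4)) *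
            ‖H‖ ^ (-(z.re + ((l : ℝ) + 1) / 2)) := by
  intro α
  have hν : 1 / 2 ≤ (z + l / 2 : ℂ).re := by
    have : (1 : ℝ) ≤ l := by exact_mod_cast hl
    simp; linarith
  have hre : (z + l / 2 : ℂ).re = z.re + (l : ℝ) / 2 := by simp
  set L := ((List.finRange l).flatMap fun i => List.replicate (α i) i) with hL
  have hlen : (L.length : ℝ) = ∑ i, (α i : ℝ) := by
    rw [hL, List.length_flatMap]
    simp [List.sum_ofFn, ← List.ofFn_eq_map]
  obtain ⟨C, hC, h⟩ := (TT.mderiv (l := l) hν L).bound hν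
  refine ⟨C + 1, by positivity, fun R hR H hH => ?_⟩
  have hD : 0 < R - ρ₀ ^ 2 := by linarith
  set D := R - ρ₀ ^ 2
  have hs : 0 < Real.sqrt D := Real.sqrt_pos.2 hD
  have hn : 0 < ‖H‖ := norm_pos_iff.2 hH
  have e : (fun H' : EuclideanSpace ℝ (Fin l) => Jmod (z + l / 2) (Real.sqrt D * ‖H'‖)) =
      fun H' => (fun x : EuclideanSpace ℝ (Fin l) => Jmod (z + l / 2) ‖x‖) (Real.sqrt D • H') := by
    funext H'
    simp only [norm_smul, Real.norm_eq_abs, abs_of_pos hs]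
  unfold partialD
  rw [← hL, e, mderiv_scale L (fun x : EuclideanSpace ℝ (Fin l) => Jmod (z + l / 2) ‖x‖) (Real.sqrt D), norm_smul, norm_pow, Real.norm_eq_abs, abs_of_pos hs]
  have h1 := h (Real.sqrt D • H) (smul_ne_zero hs.ne' hH)
  rw [norm_smul, Real.norm_eq_abs, abs_of_pos hs, hre] at h1
  set a := z.re + ((l : ℝ) + 1) / 2 with ha
  have ha0 : 0 ≤ a := by positivity
  have h2 : (1 + Real.sqrt D * ‖H‖) ^ (-(z.re + (l : ℝ) / 2 + 1 / 2 + (0 : ℕ))) ≤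
      (Real.sqrt D * ‖H‖) ^ (-a) := by
    rw [show -(z.re + (l : ℝ) / 2 + 1 / 2 + (0 : ℕ)) = -a by rw [ha]; push_cast; ring]
    exact Real.rpow_le_rpow_of_nonpos (by positivity) (by linarith) (by linarith)
  calc _ ≤ Real.sqrt D ^ L.length * ((C + 1) * (Real.sqrt D * ‖H‖) ^ (-a)) := by
        gcongr
        refine h1.trans ?_
        gcongr
        linarith
    _ = (C + 1) * (Real.sqrt D ^ L.length * Real.sqrt D ^ (-a)) * ‖H‖ ^ (-a) := by
        rw [Real.mul_rpow hs.le hn.le]; ring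
    _ = _ := by
        congr 2
        rw [← Real.rpow_natCast, ← Real.rpow_add hs, Real.sqrt_eq_rpow, ← Real.rpow_mul hD.le, hlen]
        congr 1
        rw [ha]; ring
end
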